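/- Let μ be a family of probability measures on the discrete groupoid 𝒢 and let x be a unit. Suppose μ satisfies the Reiter condition at x: for every g ∈ 𝒢^x, lim_{n→∞} ‖g·μ^{*n,s(g)} − μ^{*n,x}‖₁ = 0. Then the Markov operator P_μ^x is Liouville: every f ∈ ℓ∞(𝒢^x) with P_μ^x f = f is a constant function on 𝒢^x. -/

import Mathlib

open CategoryTheory

/-- The fiber `𝒢^x`: elements of the groupoid with range (target) `x`,
encoded as pairs `⟨z, g⟩` with `g : z ⟶ x`; the source of such an element is `z`. -/
abbrev GpdFiber (Ω : Type*) [Groupoid Ω] (x : Ω) := Σ z : Ω, z ⟶ x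

/-- The convolution `f * μ` of a function `f` on `𝒢^x` with a family of measures `μ`:
`(f*μ)(a) = ∑_{h : s(h)=s(a)} f(a h⁻¹) · μ^{r(h)}(h)`.  Here the product `g h` of groupoid
elements (defined when `s(g) = r(h)`) corresponds to the composite `h ≫ g` of morphisms. -/
noncomputable def convF {Ω : Type*} [Groupoid Ω] {x : Ω} (f : GpdFiber Ω x → ℝ)
    (μ : ∀ y : Ω, GpdFiber Ω y → ℝ) : GpdFiber Ω x → ℝ :=
  fun a => ∑' p : Σ w : Ω, (a.1 ⟶ w), f ⟨p.1, Groupoid.inv p.2 ≫ a.2⟩ * μ p.1 ⟨a.1, p.2⟩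

/-- A family of probability measures on a discrete groupoid: each `μ^x` is a nonnegative
function on `𝒢^x` with total sum `1`. -/
def IsProbFamily {Ω : Type*} [Groupoid Ω] (μ : ∀ y : Ω, GpdFiber Ω y → ℝ) : Prop :=
  (∀ (y : Ω) (p : GpdFiber Ω y), 0 ≤ μ y p) ∧ ∀ y : Ω, HasSum (μ y) 1

/-- The Markov operator `P_μ^x` on bounded functions on `𝒢^x`:
`(P_μ^x f)(g) = ∑_{h ∈ 𝒢^{s(g)}} f(gh) · μ^{s(g)}(h)`. -/
noncomputable def markovOp {Ω : Type*} [Groupoid Ω] {x : Ω}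
    (μ : ∀ y : Ω, GpdFiber Ω y → ℝ) (f : GpdFiber Ω x → ℝ) : GpdFiber Ω x → ℝ :=
  fun g => ∑' h : Σ w : Ω, (w ⟶ g.1), f ⟨h.1, h.2 ≫ g.2⟩ * μ g.1 ⟨h.1, h.2⟩

/-- The point mass `δ_g` at an element `g ∈ 𝒢^x`. -/
noncomputable def diracF {Ω : Type*} [Groupoid Ω] {x : Ω} (g : GpdFiber Ω x) :
    GpdFiber Ω x → ℝ :=
  fun a => letI := Classical.propDecidable (a = g); if a = g then 1 else 0

/-- The translate `g·f` of a function `f` on `𝒢^x` by `g` with `s(g) = x`, `r(g) = y`: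
`(g·f)(a) = f(g⁻¹ a)`. -/
def translateF {Ω : Type*} [Groupoid Ω] {x y : Ω} (g : x ⟶ y) (f : GpdFiber Ω x → ℝ) :
    GpdFiber Ω y → ℝ :=
  fun a => f ⟨a.1, a.2 ≫ Groupoid.inv g⟩

/-- The `n`-fold convolution power `μ^{*n}` of a family of measures (with `μ^{*0}` the
family of point masses at the units, so that `μ^{*1} = μ`, `μ^{*(n+1)} = μ^{*n} * μ`). -/
noncomputable def convPow {Ω : Type*} [Groupoid Ω] (μ : ∀ y : Ω, GpdFiber Ω y → ℝ) :
    ℕ → ∀ y : Ω, GpdFiber Ω y → ℝ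
  | 0 => fun y => diracF (⟨y, 𝟙 y⟩ : GpdFiber Ω y)
  | n + 1 => fun x => convF (convPow μ n x) μ

/-- Reindexing of composable pairs. -/
def pairEquiv {Ω : Type*} [Groupoid Ω] (y : Ω) :
    (Σ g : GpdFiber Ω y, GpdFiber Ω g.1) ≃ (Σ a : GpdFiber Ω y, Σ w : Ω, (a.1 ⟶ w)) where
  toFun q := ⟨⟨q.2.1, q.2.2 ≫ q.1.2⟩, ⟨q.1.1, q.2.2⟩⟩
  invFun q := ⟨⟨q.2.1, Groupoid.inv q.2.2 ≫ q.1.2⟩, ⟨q.1.1, q.2.2⟩⟩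
  left_inv q := by
    rcases q with ⟨⟨z, g⟩, ⟨w, h⟩⟩
    simp
  right_inv q := by
    rcases q with ⟨⟨z, g⟩, ⟨w, h⟩⟩
    simp

/-- Left translation as a bijection of fibers. -/
def transEquiv {Ω : Type*} [Groupoid Ω] {y x : Ω} (g : y ⟶ x) :
    GpdFiber Ω x ≃ GpdFiber Ω y where
  toFun a := ⟨a.1, a.2 ≫ Groupoid.inv g⟩
  invFun a := ⟨a.1, a.2 ≫ g⟩
  left_inv q := by simp
  right_inv q := by simp

lemma conv_key {Ω : Type*} [Groupoid Ω] (μ : ∀ y : Ω, GpdFiber Ω y → ℝ) (hμ : IsProbFamily μ)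
    (y : Ω) (ν : GpdFiber Ω y → ℝ) (h0 : ∀ a, 0 ≤ ν a) (h1 : HasSum ν 1)
    (F : GpdFiber Ω y → ℝ) (C : ℝ) (hF : ∀ a, |F a| ≤ C) :
    HasSum (fun a => F a * convF ν μ a) (∑' g, ν g * markovOp μ F g) := by
  have hnn : ∀ q : Σ g : GpdFiber Ω y, GpdFiber Ω g.1, 0 ≤ ν q.1 * μ q.1.1 q.2 :=
    fun q => mul_nonneg (h0 q.1) (hμ.1 q.1.1 q.2)
  have hS : Summable (fun q : Σ g : GpdFiber Ω y, GpdFiber Ω g.1 => ν q.1 * μ q.1.1 q.2) := by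
    refine (summable_sigma_of_nonneg (β := fun g : GpdFiber Ω y => GpdFiber Ω g.1)
      (f := fun q => ν q.1 * μ q.1.1 q.2)
      hnn).mpr ⟨fun g => Summable.mul_left (f := μ g.1) (ν g) (hμ.2 g.1).summable, ?_⟩
    have : (fun g : GpdFiber Ω y => ∑' h : GpdFiber Ω g.1, ν g * μ g.1 h) = ν := by
      funext g
      rw [tsum_mul_left, (hμ.2 g.1).tsum_eq, mul_one]
    have h3 := h1.summable
    rw [← this] at h3
    exact h3
  have hT : Summable (fun q : Σ g : GpdFiber Ω y, GpdFiber Ω g.1 =>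
      F ⟨q.2.1, q.2.2 ≫ q.1.2⟩ * (ν q.1 * μ q.1.1 q.2)) := by
    refine Summable.of_norm_bounded (hS.mul_left C) (fun q => ?_)
    rw [norm_mul, Real.norm_eq_abs, Real.norm_of_nonneg (hnn q)]
    exact mul_le_mul_of_nonneg_right (hF _) (hnn q)
  have e1 : (∑' g, ν g * markovOp μ F g) = ∑' q : Σ g : GpdFiber Ω y, GpdFiber Ω g.1,
      F ⟨q.2.1, q.2.2 ≫ q.1.2⟩ * (ν q.1 * μ q.1.1 q.2) := by
    rw [hT.tsum_sigma]
    refine tsum_congr fun g => ?_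
    rw [markovOp, ← tsum_mul_left]
    exact tsum_congr fun h => by ring
  have hS' := (pairEquiv y).symm.summable_iff.mpr hS
  have hT' := (pairEquiv y).symm.hasSum_iff.mpr hT.hasSum
  rw [e1]
  refine hT'.sigma fun a => ?_
  have hs := (hS'.sigma_factor a).hasSum.mul_left (F a)
  refine Eq.mp (congrArg (fun φ => HasSum φ _) (funext fun p => ?_)) hs
  simp [pairEquiv]

lemma convPow_prob {Ω : Type*} [Groupoid Ω] (μ : ∀ y : Ω, GpdFiber Ω y → ℝ)
    (hμ : IsProbFamily μ) (y : Ω) (n : ℕ) :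
    (∀ a, 0 ≤ convPow μ n y a) ∧ HasSum (convPow μ n y) 1 := by
  classical
  induction n with
  | zero =>
    refine ⟨fun a => ?_, ?_⟩
    · simp only [convPow, diracF]; split_ifs <;> norm_num
    · simp only [convPow]
      convert hasSum_ite_eq (⟨y, 𝟙 y⟩ : GpdFiber Ω y) (1 : ℝ)
      simp only [diracF]
      split_ifs <;> rfl
  | succ n ih =>
    refine ⟨fun a => tsum_nonneg fun p => mul_nonneg (ih.1 _) (hμ.1 _ _), ?_⟩
    have := conv_key μ hμ y _ ih.1 ih.2 (fun _ => 1) 1 (by simp)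
    have h2 : markovOp μ (fun _ : GpdFiber Ω y => (1 : ℝ)) = fun _ => 1 := by
      funext g
      simp only [markovOp, one_mul]
      exact (hμ.2 g.1).tsum_eq
    simpa [h2, ih.2.tsum_eq, convPow] using this

lemma convPow_harm {Ω : Type*} [Groupoid Ω] (μ : ∀ y : Ω, GpdFiber Ω y → ℝ)
    (hμ : IsProbFamily μ) (y : Ω) (F : GpdFiber Ω y → ℝ) (C : ℝ) (hF : ∀ a, |F a| ≤ C)
    (hh : markovOp μ F = F) (n : ℕ) :
    HasSum (fun a => F a * convPow μ n y a) (F ⟨y, 𝟙 y⟩) := by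
  classical
  induction n with
  | zero =>
    simp only [convPow, diracF]
    convert hasSum_ite_eq (⟨y, 𝟙 y⟩ : GpdFiber Ω y) (F ⟨y, 𝟙 y⟩) using 2 with a
    split_ifs with h <;> simp [h]
  | succ n ih =>
    have hp := convPow_prob μ hμ y n
    have := conv_key μ hμ y _ hp.1 hp.2 F C hF
    rw [hh] at this
    rw [← ih.tsum_eq]
    simpa only [mul_comm, convPow] using this

/-- if `μ` satisfies the Reiter condition at `x`, then `P_μ^x` is Liouville:
every bounded `P_μ^x`-harmonic function on `𝒢^x` is constant. -/
theorem markovOp_liouville {Ω : Type*} [Groupoid Ω]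
    [∀ x : Ω, Countable (GpdFiber Ω x)]
    (μ : ∀ y : Ω, GpdFiber Ω y → ℝ) (hμ : IsProbFamily μ) (x : Ω)
    (hReiter : ∀ g : GpdFiber Ω x,
      Filter.Tendsto
        (fun n => ∑' a, |translateF g.2 (convPow μ n g.1) a - convPow μ n x a|)
        Filter.atTop (nhds 0)) :
    ∀ f : GpdFiber Ω x → ℝ, (∃ C, ∀ a, |f a| ≤ C) → markovOp μ f = f →
      ∀ a b, f a = f b := by
  intro f ⟨C, hC⟩ hf
  have main : ∀ g : GpdFiber Ω x, f g = f ⟨x, 𝟙 x⟩ := by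
    intro g
    have hA : ∀ n, HasSum (fun a => f a * translateF g.2 (convPow μ n g.1) a) (f g) := by
      intro n
      have := convPow_harm μ hμ g.1 (fun h => f ⟨h.1, h.2 ≫ g.2⟩) C (fun a => hC _) (by
        funext h
        have h2 := congrFun hf ⟨h.1, h.2 ≫ g.2⟩
        simpa [markovOp] using h2) n
      have h3 := (transEquiv g.2).hasSum_iff.mpr this
      simpa [Function.comp_def, transEquiv, translateF] using h3
    have hB := convPow_harm μ hμ x f C hC hf
    have hbd : ∀ n, |f g - f ⟨x, 𝟙 x⟩| ≤
        C * ∑' a, |translateF g.2 (convPow μ n g.1) a - convPow μ n x a| := by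
      intro n
      have hd := (hA n).sub (hB n)
      have s1 : Summable (translateF g.2 (convPow μ n g.1)) :=
        (transEquiv g.2).summable_iff.mpr (convPow_prob μ hμ g.1 n).2.summable
      have s2 := ((s1.sub (convPow_prob μ hμ x n).2.summable).abs).mul_left C
      rw [← tsum_mul_left, ← hd.tsum_eq, ← Real.norm_eq_abs]
      refine tsum_of_norm_bounded s2.hasSum fun a => ?_
      rw [← mul_sub, norm_mul, Real.norm_eq_abs, Real.norm_eq_abs]
      exact mul_le_mul_of_nonneg_right (hC a) (abs_nonneg _)
    have hl := (hReiter g).const_mul C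
    rw [mul_zero] at hl
    have h0 := ge_of_tendsto' hl hbd
    exact sub_eq_zero.mp (abs_nonpos_iff.mp h0)
  intro a b
  rw [main a, main b]
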